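/- arXiv:2305.14227 — 3 statements merged into one kernel-verified Lean document; each statement's English description precedes it below -/
import Mathlib

section
/- Let K be a field and p : ℕ → K[X] a sequence of polynomials with deg(p n) = n for every n. Let L : K[X] → K[X] be a linear map with L(p 0) = 0 and L(p (n+1)) = p n for all n, and let l₀ : K[X] → K be a linear functional with l₀(p n) = δ_{0n}. Then for every polynomial f one has the resolution of the identity f = Σ_{k=0}^{deg f} l₀(L^k f) · p k. -/
open Polynomial

/-!
The functionals `l₀ ∘ L ^ k` are biorthogonal to the `p k`. Restricted to `k < m`, they map the
polynomials of degree `< m` onto `Fin m → R`, a free module of the same finite rank; a surjection of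
this kind is injective by the Orzech property. A polynomial and its expansion have the same image,
so they coincide.
-/

section Biorthogonal

variable {R M ι : Type*} [Semiring R] [AddCommMonoid M] [Module R M]

theorem apply_pow_apply_eq_ite_of_shift {v : ℕ → M} {L : Module.End R M} {l : M →ₗ[R] R}
    (hL_zero : L (v 0) = 0) (hL_succ : ∀ n, L (v (n + 1)) = v n)
    (hl : ∀ n, l (v n) = if n = 0 then 1 else 0) (k n : ℕ) :
    l ((L ^ k) (v n)) = if n = k then 1 else 0 := by
  induction k generalizing n with
  | zero => simpa using hl n
  | succ k ih =>
    rw [pow_succ, Module.End.mul_apply]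
    cases n with
    | zero => simp [hL_zero]
    | succ n => simp [hL_succ, ih]

theorem apply_sum_smul_of_biorthogonal [Fintype ι] [DecidableEq ι] {v : ι → M}
    {φ : ι → M →ₗ[R] R} (hφ : ∀ i j, φ i (v j) = if j = i then 1 else 0) (a : ι → R) (i : ι) :
    φ i (∑ j, a j • v j) = a i := by
  simp [hφ]

theorem eq_sum_smul_of_biorthogonal [OrzechProperty R] [Fintype ι] [DecidableEq ι]
    {e : M →ₗ[R] ι → R} (he : Function.Injective e) {v : ι → M} {φ : ι → M →ₗ[R] R}
    (hφ : ∀ i j, φ i (v j) = if j = i then 1 else 0) (x : M) :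
    x = ∑ i, φ i x • v i := by
  have pi_surjective : Function.Surjective (LinearMap.pi φ) := fun a =>
    ⟨∑ i, a i • v i, funext (apply_sum_smul_of_biorthogonal hφ a)⟩
  have pi_injective : Function.Injective (LinearMap.pi φ) :=
    OrzechProperty.injective_of_surjective_of_injective e _ he pi_surjective
  apply pi_injective
  funext i
  exact (apply_sum_smul_of_biorthogonal hφ (fun j => φ j x) i).symm

end Biorthogonal

section Polynomial

variable {R : Type*} [Semiring R] [OrzechProperty R]

theorem eq_sum_range_smul_of_biorthogonal_of_degree_lt {p : ℕ → R[X]}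
    (hp : ∀ n, (p n).degree ≤ n) {φ : ℕ → R[X] →ₗ[R] R}
    (hφ : ∀ k n, φ k (p n) = if n = k then 1 else 0) {m : ℕ} {f : R[X]} (hf : f.degree < m) :
    f = ∑ k ∈ Finset.range m, φ k f • p k := by
  have p_mem (k : Fin m) : p k ∈ degreeLT R m :=
    mem_degreeLT.2 ((hp k).trans_lt (by exact_mod_cast k.isLt))
  have expansion := eq_sum_smul_of_biorthogonal
    (e := (degreeLTEquiv R m).toLinearMap) (degreeLTEquiv R m).injective
    (v := fun k => ⟨p k, p_mem k⟩) (φ := fun k => φ k ∘ₗ (degreeLT R m).subtype)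
    (fun i j => by simp [hφ, Fin.ext_iff]) ⟨f, mem_degreeLT.2 hf⟩
  simpa [Finset.sum_range] using congrArg Subtype.val expansion

theorem stmt_6_general (p : ℕ → R[X]) (hdeg : ∀ n : ℕ, (p n).degree ≤ n)
    (L : Module.End R R[X])
    (hL0 : L (p 0) = 0) (hL : ∀ n : ℕ, L (p (n + 1)) = p n)
    (l₀ : R[X] →ₗ[R] R)
    (hl₀ : ∀ n : ℕ, l₀ (p n) = if n = 0 then 1 else 0) (f : R[X]) :
    f = ∑ k ∈ Finset.range (f.natDegree + 1), l₀ ((L ^ k) f) • p k :=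
  eq_sum_range_smul_of_biorthogonal_of_degree_lt hdeg (φ := fun k => l₀ ∘ₗ L ^ k)
    (apply_pow_apply_eq_ite_of_shift hL0 hL hl₀)
    (degree_le_natDegree.trans_lt (by exact_mod_cast f.natDegree.lt_succ_self))

end Polynomial

/-- Resolution of the identity: if `p n` has degree exactly `n`, `L (p 0) = 0`,
`L (p (n+1)) = p n` and `l₀ (p n) = δ_{0n}`, then every polynomial `f` satisfies
`f = Σ_{k=0}^{deg f} l₀(L^k f) · p k`. -/
theorem stmt_6 {K : Type*} [Field K]
    (p : ℕ → K[X]) (hdeg : ∀ n : ℕ, (p n).degree = n)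
    (L : Module.End K K[X])
    (hL0 : L (p 0) = 0) (hL : ∀ n : ℕ, L (p (n + 1)) = p n)
    (l₀ : K[X] →ₗ[K] K)
    (hl₀ : ∀ n : ℕ, l₀ (p n) = if n = 0 then 1 else 0) :
    ∀ f : K[X],
      f = ∑ k ∈ Finset.range (f.natDegree + 1), l₀ ((L ^ k) f) • p k :=
  stmt_6_general p (fun n => (hdeg n).le) L hL0 hL l₀ hl₀
end

section
/- (Binomial type) Let K be a field of characteristic zero and p : ℕ → K[X] with deg(p n) = n for all n. Let L : K[X] → K[X] be a linear map satisfying: (i) L(p 0) = 0 and L(p (n+1)) = p n for all n; (ii) L commutes with every translation, i.e. L(f(X + y)) = (L f)(X + y) for all f ∈ K[X] and y ∈ K; (iii) (p n)(0) = δ_{0n}. Then the binomial identity holds: p n(X + y) = Σ_{k=0}^n (p_{n−k})(y) · p k(X) for every n ∈ ℕ and y ∈ K. -/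
open Polynomial

/-!
Evaluating at `0` after applying `L ^ k` reads off the coefficient of `p k` in any combination of
the `p i`, so `f = ∑ k, (L ^ k f)(0) • p k` for every polynomial `f`, as in Maclaurin's formula.
For `f = p n (X + y)` the operator `L ^ k` passes through the translation, and the coefficient
becomes `p (n - k)` evaluated at `y`, or zero when `k > n`.
-/

/-- The sequence `p` is basic for the operator `L`: it is lowered by `L` and normalized by the
functional `ε`. In umbral calculus `L` is a delta operator and `ε` is evaluation at `0`;
here `p n` is the classical basic polynomial divided by `n!`, so `L` lowers it without a factor. -/
structure IsBasicSequence {R M : Type*} [Semiring R] [AddCommMonoid M] [Module R M]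
    (L : Module.End R M) (ε : M →ₗ[R] R) (p : ℕ → M) : Prop where
  apply_zero : L (p 0) = 0
  apply_succ (n : ℕ) : L (p (n + 1)) = p n
  functional_apply (n : ℕ) : ε (p n) = if n = 0 then 1 else 0

namespace IsBasicSequence

variable {R M : Type*} [Semiring R] [AddCommMonoid M] [Module R M]
  {L : Module.End R M} {ε : M →ₗ[R] R} {p : ℕ → M}

theorem pow_apply_add (h : IsBasicSequence L ε p) (n k : ℕ) : (L ^ k) (p (n + k)) = p n := by
  induction k with
  | zero => simp
  | succ k ih => rw [pow_succ, Module.End.mul_apply, ← add_assoc, h.apply_succ, ih]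

theorem pow_apply_of_le (h : IsBasicSequence L ε p) {n k : ℕ} (hkn : k ≤ n) :
    (L ^ k) (p n) = p (n - k) := by
  simpa only [Nat.sub_add_cancel hkn] using h.pow_apply_add (n - k) k

theorem pow_apply_of_lt (h : IsBasicSequence L ε p) {n k : ℕ} (hnk : n < k) :
    (L ^ k) (p n) = 0 := by
  have pow_succ_apply : (L ^ (n + 1)) (p n) = 0 := by
    rw [pow_succ', Module.End.mul_apply, h.pow_apply_of_le le_rfl, Nat.sub_self, h.apply_zero]
  exact Module.End.pow_map_zero_of_le hnk pow_succ_apply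

theorem functional_pow_apply (h : IsBasicSequence L ε p) (n k : ℕ) :
    ε ((L ^ k) (p n)) = if n = k then 1 else 0 := by
  obtain hnk | hkn := lt_or_ge n k
  · rw [h.pow_apply_of_lt hnk, map_zero, if_neg hnk.ne]
  · rw [h.pow_apply_of_le hkn, h.functional_apply]
    exact if_congr (by lia) rfl rfl

theorem functional_pow_linearCombination (h : IsBasicSequence L ε p) (c : ℕ →₀ R) (k : ℕ) :
    ε ((L ^ k) (Finsupp.linearCombination R p c)) = c k := by
  simp [Finsupp.linearCombination_apply, map_finsuppSum, h.functional_pow_apply]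

theorem eq_sum_functional_pow_smul (h : IsBasicSequence L ε p) {f : M}
    (hf : f ∈ Submodule.span R (Set.range p)) {N : ℕ} (hN : (L ^ N) f = 0) :
    f = ∑ k ∈ Finset.range N, ε ((L ^ k) f) • p k := by
  rw [← Finsupp.range_linearCombination] at hf
  obtain ⟨c, rfl⟩ := hf
  have support_subset : c.support ⊆ Finset.range N := by
    intro k hk
    by_contra hkN
    have hNk : N ≤ k := by simpa using hkN
    apply Finsupp.mem_support_iff.mp hk
    rw [← h.functional_pow_linearCombination c k, Module.End.pow_map_zero_of_le hNk hN, map_zero]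
  simp only [h.functional_pow_linearCombination]
  exact Finsupp.sum_of_support_subset c support_subset _ (by simp)

theorem apply_eq_sum_of_commute (h : IsBasicSequence L ε p) {T : Module.End R M}
    (hLT : Commute L T) {n : ℕ} (hT : T (p n) ∈ Submodule.span R (Set.range p)) :
    T (p n) = ∑ k ∈ Finset.range (n + 1), ε (T (p (n - k))) • p k := by
  have pow_apply_comm (k : ℕ) : (L ^ k) (T (p n)) = T ((L ^ k) (p n)) :=
    LinearMap.congr_fun (hLT.pow_left k).eq (p n)
  have pow_succ_apply : (L ^ (n + 1)) (T (p n)) = 0 := by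
    rw [pow_apply_comm, h.pow_apply_of_lt n.lt_succ_self, map_zero]
  rw [h.eq_sum_functional_pow_smul hT pow_succ_apply]
  refine Finset.sum_congr rfl fun k hk ↦ ?_
  rw [pow_apply_comm, h.pow_apply_of_le (Finset.mem_range_succ_iff.mp hk)]

end IsBasicSequence

theorem span_range_eq_top_of_degree_eq {K : Type*} [DivisionRing K] {p : ℕ → K[X]}
    (hdeg : ∀ n : ℕ, (p n).degree = n) : Submodule.span K (Set.range p) = ⊤ :=
  let S : Polynomial.Sequence K := ⟨p, hdeg⟩
  S.span fun n ↦ (leadingCoeff_ne_zero.mpr (S.ne_zero n)).isUnit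

theorem stmt_7_general {R : Type*} [CommSemiring R]
    (p : ℕ → R[X]) (hspan : Submodule.span R (Set.range p) = ⊤)
    (L : Module.End R R[X])
    (hL0 : L (p 0) = 0) (hL : ∀ n : ℕ, L (p (n + 1)) = p n)
    (hcomm : ∀ (f : R[X]) (y : R),
      L (f.comp (X + C y)) = (L f).comp (X + C y))
    (heval : ∀ n : ℕ, (p n).eval 0 = if n = 0 then 1 else 0) (n : ℕ) (y : R) :
    (p n).comp (X + C y)
      = ∑ k ∈ Finset.range (n + 1), ((p (n - k)).eval y) • p k := by
  have basic : IsBasicSequence L (leval 0) p := ⟨hL0, hL, heval⟩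
  have commute_taylor : Commute L (taylor y) := LinearMap.ext fun f ↦ hcomm f y
  have expansion := basic.apply_eq_sum_of_commute commute_taylor
    (n := n) (hspan ▸ Submodule.mem_top)
  simpa only [leval_apply, taylor_apply, eval_comp, eval_add, eval_X, eval_C, zero_add]
    using expansion

/-- Binomial type: if `p n` has degree exactly `n`, the delta operator `L`
satisfies `L (p 0) = 0`, `L (p (n+1)) = p n`, commutes with all translations
`f(X) ↦ f(X + y)`, and `(p n)(0) = δ_{0n}`, then the binomial identity
`p_n(X + y) = Σ_{k=0}^n p_{n−k}(y) · p_k(X)` holds. -/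
theorem stmt_7 {K : Type*} [Field K] [CharZero K]
    (p : ℕ → K[X]) (hdeg : ∀ n : ℕ, (p n).degree = n)
    (L : Module.End K K[X])
    (hL0 : L (p 0) = 0) (hL : ∀ n : ℕ, L (p (n + 1)) = p n)
    (hcomm : ∀ (f : K[X]) (y : K),
      L (f.comp (X + C y)) = (L f).comp (X + C y))
    (heval : ∀ n : ℕ, (p n).eval 0 = if n = 0 then 1 else 0) :
    ∀ (n : ℕ) (y : K),
      (p n).comp (X + C y)
        = ∑ k ∈ Finset.range (n + 1), ((p (n - k)).eval y) • p k := by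
  exact stmt_7_general p (span_range_eq_top_of_degree_eq hdeg) L hL0 hL hcomm heval
end

section
/- Any translation-invariant linear functional on real polynomials vanishes: if m : ℝ[X] → ℝ is a linear map such that m(f(X + u)) = m(f) for every polynomial f ∈ ℝ[X] and every u ∈ ℝ, then m = 0. -/
open Polynomial

/-!
Over a `ℚ`-algebra, multiples of Bernoulli polynomials solve `f(X + 1) - f(X) = Xⁿ`, so every
polynomial is a difference `f(X + 1) - f(X)`; rescaling the variable replaces the step `1` by any
unit `u`. An additive map invariant under translation by `u` kills all such differences.
-/

lemma taylor_one_bernoulli_sub_bernoulli (n : ℕ) :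
    taylor 1 (Polynomial.bernoulli n) - Polynomial.bernoulli n = n • X ^ (n - 1) := by
  rw [taylor_apply, C_1, add_comm X 1, bernoulli_comp_one_add_X, add_sub_cancel_left]

section Ring

variable {R : Type*} [Ring R] [Algebra ℚ R]

lemma exists_taylor_one_sub_eq_X_pow (n : ℕ) :
    ∃ f : R[X], taylor 1 f - f = X ^ n := by
  let f : ℚ[X] := (n + 1 : ℚ)⁻¹ • Polynomial.bernoulli (n + 1)
  have hf : taylor 1 f - f = X ^ n := by
    rw [map_smul, ← smul_sub, taylor_one_bernoulli_sub_bernoulli, ← Nat.cast_smul_eq_nsmul ℚ,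
      smul_smul, Nat.cast_succ, inv_mul_cancel₀ n.cast_add_one_ne_zero, one_smul,
      Nat.add_sub_cancel]
  refine ⟨f.map (algebraMap ℚ R), ?_⟩
  simpa only [Polynomial.map_sub, map_taylor, map_one, Polynomial.map_pow, map_X] using
    congrArg (Polynomial.map (algebraMap ℚ R)) hf

lemma surjective_taylor_one_sub_id :
    Function.Surjective (taylor 1 - LinearMap.id : R[X] →ₗ[R] R[X]) := by
  intro g
  induction g using Polynomial.induction_on' with
  | add p q hp hq =>
    obtain ⟨a, rfl⟩ := hp
    obtain ⟨b, rfl⟩ := hq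
    exact ⟨a + b, map_add _ a b⟩
  | monomial n c =>
    obtain ⟨f, hf⟩ := exists_taylor_one_sub_eq_X_pow (R := R) n
    refine ⟨c • f, ?_⟩
    rw [map_smul, LinearMap.sub_apply, LinearMap.id_apply, hf, smul_X_eq_monomial]

end Ring

lemma taylor_comp_C_mul_X {R : Type*} [CommSemiring R] (f : R[X]) (u v : R) :
    taylor u (f.comp (C v * X)) = (taylor (v * u) f).comp (C v * X) := by
  simp only [taylor_apply, comp_assoc, mul_comp, add_comp, C_comp, X_comp, C_mul, mul_add]

section CommRing

variable {R : Type*} [CommRing R] [Algebra ℚ R]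

lemma surjective_taylor_sub_id {u : R} (hu : IsUnit u) :
    Function.Surjective (taylor u - LinearMap.id : R[X] →ₗ[R] R[X]) := by
  intro g
  obtain ⟨v, hvu⟩ := hu.exists_left_inv
  obtain ⟨f, hf⟩ := surjective_taylor_one_sub_id (g.comp (C u * X))
  rw [LinearMap.sub_apply, LinearMap.id_apply] at hf
  refine ⟨f.comp (C v * X), ?_⟩
  calc taylor u (f.comp (C v * X)) - f.comp (C v * X)
      = (taylor 1 f - f).comp (C v * X) := by rw [taylor_comp_C_mul_X, hvu, sub_comp]
    _ = g.comp (C (v * u) * X) := by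
      rw [hf, comp_assoc, mul_comp, C_comp, X_comp, ← mul_assoc, ← C_mul, mul_comm u v]
    _ = g := by rw [hvu, C_1, one_mul, comp_X]

theorem stmt_9_general {M : Type*} [AddGroup M] (m : R[X] →+ M) {u : R}
    (hu : IsUnit u) (h : ∀ f : R[X], m (f.comp (X + C u)) = m f) : m = 0 := by
  refine AddMonoidHom.ext fun g => ?_
  obtain ⟨f, rfl⟩ := surjective_taylor_sub_id hu g
  rw [LinearMap.sub_apply, LinearMap.id_apply, taylor_apply, map_sub, h, sub_self,
    AddMonoidHom.zero_apply]

end CommRing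

/-- Any translation-invariant linear functional on real polynomials vanishes. -/
theorem stmt_9 (m : ℝ[X] →ₗ[ℝ] ℝ)
    (h : ∀ (f : ℝ[X]) (u : ℝ), m (f.comp (X + C u)) = m f) :
    m = 0 :=
  LinearMap.toAddMonoidHom_injective
    (stmt_9_general m.toAddMonoidHom isUnit_one fun f => h f 1)
end
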